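/- Any two W-configurations are related by an orthogonal transformation: if X and X' are W-configurations in ℝ^10, then there exists a linear isometric equivalence f of EuclideanSpace ℝ (Fin 10) onto itself with f(X) = X'. (This is the concrete form of the main theorem: an association scheme with the parameters of the scheme W on the blocks of the Witt 4-(11,5,1) design is determined up to isomorphism, since its spherical representation into the first eigenspace is unique up to orthogonal transformation.) -/

import Mathlib

open RealInnerProductSpace

noncomputable section

/-- The three admissible inner product values (angles). -/
def α1 : ℝ := 4/15
def α2 : ℝ := -1/10
def α3 : ℝ := -7/15

/-- The three admissible angles, indexed. -/
def wAngle : Fin 3 → ℝ := ![α1, α2, α3]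

/-- The intersection numbers `p^k_{ij}` of the association scheme `W` of the
Witt 4-(11,5,1) design (index `k` first, then row `i`, column `j`). -/
def wP : Fin 3 → Fin 3 → Fin 3 → ℕ :=
  ![![![15,10,4], ![10,4,6], ![4,6,5]],
    ![![15,6,9], ![6,10,3], ![9,3,3]],
    ![![8,12,10], ![12,4,4], ![10,4,0]]]

/-- A `W`-configuration: 66 unit vectors in ℝ^10 whose pairwise inner products
lie in `{α1, α2, α3}`, realizing the valencies 30, 20, 15 and the intersection
numbers `p^k_{ij}` of the association scheme `W` of the Witt 4-(11,5,1)
design. -/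
def IsWConfig (X : Set (EuclideanSpace ℝ (Fin 10))) : Prop :=
  X.ncard = 66 ∧ (∀ u ∈ X, ‖u‖ = 1) ∧
  (∀ u ∈ X, ∀ v ∈ X, u ≠ v → ⟪u, v⟫ ∈ ({α1, α2, α3} : Set ℝ)) ∧
  (∀ u ∈ X, {v | v ∈ X ∧ ⟪u, v⟫ = α1}.ncard = 30 ∧
            {v | v ∈ X ∧ ⟪u, v⟫ = α2}.ncard = 20 ∧
            {v | v ∈ X ∧ ⟪u, v⟫ = α3}.ncard = 15) ∧
  (∀ u ∈ X, ∀ v ∈ X, u ≠ v → ∀ k i j : Fin 3, ⟪u, v⟫ = wAngle k →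
    {w | w ∈ X ∧ ⟪u, w⟫ = wAngle i ∧ ⟪w, v⟫ = wAngle j}.ncard = wP k i j)

open Finset in
/-- A strongly regular graph with the parameters of the triangular graph `T(12)` contains an
11-clique. -/
theorem exists_isClique_card_eleven {V : Type*} [Fintype V] [DecidableEq V]
    (G : SimpleGraph V) [DecidableRel G.Adj] (h : G.IsSRGWith 66 20 10 4) :
    ∃ s : Finset V, G.IsClique s ∧ s.card = 11 := by
  have hinter (a b : V) : (G.neighborFinset a ∩ G.neighborFinset b).card =
      Fintype.card (G.commonNeighbors a b) := by
    rw [← Set.toFinset_card]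
    congr 1
    ext w
    simp [SimpleGraph.mem_commonNeighbors]
  obtain ⟨u⟩ : Nonempty V := Fintype.card_pos_iff.mp (by rw [h.card]; norm_num)
  set S := G.neighborFinset u with hS
  have hScard : S.card = 20 := h.regular u
  have memS {x : V} : x ∈ S ↔ G.Adj u x := by simp [hS]
  have hlocal {x : V} (hx : x ∈ S) : (S ∩ G.neighborFinset x).card = 10 := by
    rw [hinter, h.of_adj u x (memS.mp hx)]
  have hcommon {x y : V} (hx : x ∈ S) (hy : y ∈ S) (hne : x ≠ y) (hxy : ¬ G.Adj x y) :
      ((S ∩ G.neighborFinset x) ∩ (S ∩ G.neighborFinset y)).card ≤ 3 := by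
    have hsub : (S ∩ G.neighborFinset x) ∩ (S ∩ G.neighborFinset y) ⊆
        (G.neighborFinset x ∩ G.neighborFinset y).erase u := by
      intro w
      simp only [mem_inter, mem_erase, memS]
      rintro ⟨⟨h1, h2⟩, -, h3⟩
      exact ⟨h1.ne', h2, h3⟩
    have hu : u ∈ G.neighborFinset x ∩ G.neighborFinset y := by
      simpa using ⟨(memS.mp hx).symm, (memS.mp hy).symm⟩
    have := card_le_card hsub
    rwa [card_erase_of_mem hu, hinter, h.of_not_adj hne hxy] at this
  -- `H x` is the set of vertices of `S` that are distinct from and not adjacent to `x`.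
  let H (x : V) : Finset V := S \ insert x (G.neighborFinset x)
  have memH {x y : V} : y ∈ H x ↔ y ∈ S ∧ y ≠ x ∧ ¬ G.Adj x y := by simp [H]
  have hHcard {x : V} (hx : x ∈ S) : (H x).card = 9 := by
    have h1 : (S ∩ insert x (G.neighborFinset x)).card = 11 := by
      rw [inter_insert_of_mem hx, card_insert_of_notMem (by simp), hlocal hx]
    have h2 := card_sdiff_add_card_inter S (insert x (G.neighborFinset x))
    change (S \ insert x (G.neighborFinset x)).card = 9
    omega
  have hclaw {x y z : V} (hx : x ∈ S) (hy : y ∈ H x) (hzx : z ∈ H x) (hzy : z ∈ H y) :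
      False := by
    rw [memH] at hy hzx hzy
    have hxy := hcommon hx hy.1 hy.2.1.symm hy.2.2
    have hxz := hcommon hx hzx.1 hzx.2.1.symm hzx.2.2
    have hyz := hcommon hy.1 hzx.1 hzy.2.1.symm hzy.2.2
    have hAx := hlocal hx
    have hAy := hlocal hy.1
    have hAz := hlocal hzx.1
    set A := S ∩ G.neighborFinset x
    set B := S ∩ G.neighborFinset y
    set C := S ∩ G.neighborFinset z
    have h1 := card_union_add_card_inter A B
    have h2 := card_union_add_card_inter (A ∪ B) C
    have h3 : ((A ∪ B) ∩ C).card ≤ (A ∩ C).card + (B ∩ C).card := by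
      rw [union_inter_distrib_right]
      exact card_union_le _ _
    have h4 : (A ∪ B ∪ C).card ≤ S.card :=
      card_le_card (union_subset (union_subset inter_subset_left inter_subset_left)
        inter_subset_left)
    omega
  have hsymm {x y : V} (hx : x ∈ S) (hy : y ∈ H x) : x ∈ H y :=
    memH.mpr ⟨hx, (memH.mp hy).2.1.symm, fun hadj => (memH.mp hy).2.2 hadj.symm⟩
  have hclique {x p : V} (hx : x ∈ S) (hp : p ∈ S) (hpx : p ∉ H x)
      (hadj : ∀ k ∈ H x, k ∉ H p) : ∃ s : Finset V, G.IsClique s ∧ s.card = 11 := by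
    refine ⟨insert u (insert p (H x)), ?_, ?_⟩
    · rw [coe_insert, coe_insert, SimpleGraph.isClique_insert, SimpleGraph.isClique_insert]
      refine ⟨⟨?_, ?_⟩, ?_⟩
      · intro a ha b hb hab
        by_contra hnot
        exact hclaw hx ha hb
          (memH.mpr ⟨(memH.mp (mem_coe.mp hb)).1, hab.symm, hnot⟩)
      · intro k hk hpk
        by_contra hnot
        exact hadj k hk (memH.mpr ⟨(memH.mp (mem_coe.mp hk)).1, hpk.symm, hnot⟩)
      · intro b hb _
        rcases hb with rfl | hb
        · exact memS.mp hp
        · exact memS.mp (memH.mp (mem_coe.mp hb)).1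
    · rw [card_insert_of_notMem, card_insert_of_notMem hpx, hHcard hx]
      simp only [mem_insert, memH, memS, SimpleGraph.irrefl, false_and, or_false]
      rintro rfl
      exact G.irrefl (memS.mp hp)
  obtain ⟨x, hx⟩ : S.Nonempty := card_pos.mp (by omega)
  obtain ⟨y, hy⟩ : (H x).Nonempty := card_pos.mp (by rw [hHcard hx]; norm_num)
  have hyS := (memH.mp hy).1
  obtain ⟨p, hp, hpn⟩ : ∃ p ∈ S, p ∉ H x ∪ H y := by
    apply exists_mem_notMem_of_card_lt_card
    have := card_union_le (H x) (H y)
    have := hHcard hx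
    have := hHcard hyS
    omega
  rw [mem_union, not_or] at hpn
  by_cases hk : ∀ k ∈ H x, k ∉ H p
  · exact hclique hx hp hpn.1 hk
  by_cases hl : ∀ l ∈ H y, l ∉ H p
  · exact hclique hyS hp hpn.2 hl
  exfalso
  push Not at hk hl
  obtain ⟨k, hkx, hkp⟩ := hk
  obtain ⟨l, hly, hlp⟩ := hl
  have hkS := (memH.mp hkx).1
  have hlS := (memH.mp hly).1
  -- `p, k, x, y, l` is a pentagon of non-adjacency, so each vertex is in at most two of the `H`s.
  have hpair {a b : V} (ha : a ∈ S) (hb : b ∈ H a) (w : V) :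
      (if w ∈ H a then 1 else 0) + (if w ∈ H b then 1 else 0) ≤ 1 := by
    by_cases h1 : w ∈ H a
    · rw [if_pos h1, if_neg fun h2 => hclaw ha hb h1 h2]
    · rw [if_neg h1]
      split_ifs <;> omega
  have hcount (w : V) (_ : w ∈ S) : (if w ∈ H p then 1 else 0) + (if w ∈ H k then 1 else 0) +
      (if w ∈ H x then 1 else 0) + (if w ∈ H y then 1 else 0) + (if w ∈ H l then 1 else 0) ≤ 2 := by
    have h1 := hpair hp hkp w
    have h2 := hpair hx hkx w
    have h3 := hpair hx hy w
    have h4 := hpair hyS hly w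
    have h5 := hpair hp hlp w
    omega
  have hsum := sum_le_sum hcount
  have hsub (a : V) : ∑ w ∈ S, (if w ∈ H a then 1 else 0) = (H a).card := by
    rw [sum_boole, Nat.cast_id]
    congr 1
    ext w
    simp only [mem_filter, memH]
    tauto
  simp only [sum_add_distrib, hsub, hHcard hp, hHcard hkS, hHcard hx, hHcard hyS, hHcard hlS,
    sum_const, hScard] at hsum
  norm_num at hsum

/-- The base-4 digit of `n` at position `m`. -/
def digit (n : ℕ) (m : Fin 11) : ℕ := n / 4 ^ m.val % 4

/-- Base-4 encodings of ten codes; the `i`-th one has the digit `1` at positions `0` and `i + 1`,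
and the digit `2` at the positions `j + 1` for `j` adjacent to `i` in the Petersen graph. -/
def petersenCodes : List ℕ :=
  [677, 10265, 163913, 2621705, 2130977, 659489, 542849, 2171009, 303617, 1182209]

/-- The `i`-th entry of `petersenCodes`. -/
def petersenCode (i : Fin 10) : ℕ := petersenCodes.getD i 0

/-- Adjacency in the Petersen graph on `Fin 10`. -/
abbrev PetersenAdj (i j : Fin 10) : Prop := digit (petersenCode i) j.succ = 2

theorem petersenAdj_common : ∀ i j : Fin 10, i ≠ j → ¬ PetersenAdj i j →
    ∃ m, PetersenAdj m i ∧ PetersenAdj m j := by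
  decide +kernel

/-- The edges of the Petersen graph, each listed once. -/
def petersenEdges : List (Fin 10 × Fin 10) :=
  [(0, 1), (0, 2), (0, 3), (1, 4), (1, 5), (2, 6), (2, 7), (3, 8), (3, 9), (4, 6), (5, 7), (6, 8),
    (7, 9), (8, 5), (9, 4)]

theorem petersenAdj_edges : ∀ i j : Fin 10, PetersenAdj i j →
    (i, j) ∈ petersenEdges ∨ (j, i) ∈ petersenEdges := by
  decide +kernel

/-- A strongly regular graph with parameters `(10, 3, 0, 1)` is the Petersen graph. -/
theorem exists_petersen_labelling {V : Type*} [Fintype V] [DecidableEq V]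
    (G : SimpleGraph V) [DecidableRel G.Adj] (h : G.IsSRGWith 10 3 0 1) :
    ∃ e : Fin 10 → V, Function.Injective e ∧
      ∀ i j, G.Adj (e i) (e j) ↔ PetersenAdj i j := by
  have htri {a b c : V} (hab : G.Adj a b) (hac : G.Adj a c) : ¬ G.Adj b c := by
    intro hbc
    have := Fintype.card_eq_zero_iff.mp (h.of_adj a b hab)
    exact this.false ⟨c, hac, hbc⟩
  have hquad {a b m n : V} (hab : a ≠ b) (ham : G.Adj m a) (hbm : G.Adj m b) (han : G.Adj n a)
      (hbn : G.Adj n b) : m = n := by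
    obtain ⟨w, hw⟩ := Fintype.card_eq_one_iff.mp (h.of_not_adj hab (htri ham hbm))
    have h1 := hw ⟨m, ham.symm, hbm.symm⟩
    have h2 := hw ⟨n, han.symm, hbn.symm⟩
    exact congrArg Subtype.val (h1.trans h2.symm)
  have hmid {a b : V} (hab : a ≠ b) (hnot : ¬ G.Adj a b) : ∃ m, G.Adj m a ∧ G.Adj m b := by
    obtain ⟨w, -⟩ := Fintype.card_eq_one_iff.mp (h.of_not_adj hab hnot)
    exact ⟨w, w.2.1.symm, w.2.2.symm⟩
  have hnbr (v : V) : ∃ x y z, x ≠ y ∧ x ≠ z ∧ y ≠ z ∧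
      ∀ w, G.Adj v w ↔ w = x ∨ w = y ∨ w = z := by
    obtain ⟨x, y, z, hxy, hxz, hyz, hs⟩ := Finset.card_eq_three.mp (h.regular v)
    refine ⟨x, y, z, hxy, hxz, hyz, fun w => ?_⟩
    rw [← SimpleGraph.mem_neighborFinset, hs]
    simp
  obtain ⟨v⟩ : Nonempty V := Fintype.card_pos_iff.mp (by rw [h.card]; norm_num)
  obtain ⟨b₀, b₁, b₂, h01, h02, h12, hv⟩ := hnbr v
  have hv0 : G.Adj v b₀ := (hv _).mpr (by simp)
  have hv1 : G.Adj v b₁ := (hv _).mpr (by simp)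
  have hv2 : G.Adj v b₂ := (hv _).mpr (by simp)
  obtain ⟨x₀, y₀, hne, hx0, hy0, hxv, hyv, hb0⟩ : ∃ x y, x ≠ y ∧ G.Adj b₀ x ∧ G.Adj b₀ y ∧ x ≠ v ∧
      y ≠ v ∧ ∀ w, G.Adj b₀ w → w = v ∨ w = x ∨ w = y := by
    obtain ⟨x, y, z, hxy, hxz, hyz, hb⟩ := hnbr b₀
    rcases (hb v).mp hv0.symm with rfl | rfl | rfl
    · exact ⟨y, z, hyz, (hb _).mpr (by simp), (hb _).mpr (by simp), hxy.symm, hxz.symm,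
        fun w hw => by simpa using (hb w).mp hw⟩
    · exact ⟨x, z, hxz, (hb _).mpr (by simp), (hb _).mpr (by simp), hxy, hyz.symm,
        fun w hw => by have := (hb w).mp hw; tauto⟩
    · exact ⟨x, y, hxy, (hb _).mpr (by simp), (hb _).mpr (by simp), hxz, hyz,
        fun w hw => by have := (hb w).mp hw; tauto⟩
  -- A second neighbour of `v` has a neighbour below each other neighbour of `v`.
  have hstep {b b' x : V} (hb : G.Adj v b) (hb' : G.Adj v b') (hbb' : b ≠ b') (hx : G.Adj b x)
      (hxv : x ≠ v) : ∃ x', G.Adj x x' ∧ G.Adj b' x' ∧ x' ≠ v := by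
    have hne : x ≠ b' := by rintro rfl; exact htri hb hb' hx
    obtain ⟨m, hm, hm'⟩ := hmid hne fun hadj => hxv (hquad hbb' hx.symm hadj hb hb')
    refine ⟨m, hm.symm, hm'.symm, ?_⟩
    rintro rfl
    exact htri hm hb hx.symm
  obtain ⟨x₁, hxx1, hx1, hx1v⟩ := hstep hv0 hv1 h01 hx0 hxv
  obtain ⟨y₁, hyy1, hy1, hy1v⟩ := hstep hv0 hv1 h01 hy0 hyv
  obtain ⟨x₂, hxx2, hx2, hx2v⟩ := hstep hv1 hv2 h12 hx1 hx1v
  obtain ⟨y₂, hyy2, hy2, hy2v⟩ := hstep hv1 hv2 h12 hy1 hy1v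
  have hclose {x y z t : V} (hxz : G.Adj x z) (hzt : G.Adj z t) (hbt : G.Adj b₂ t) (htv : t ≠ v)
      (hb : ∀ w, G.Adj b₀ w → w = v ∨ w = x ∨ w = y) : G.Adj t y := by
    obtain ⟨m, htm, hbm, hmv⟩ := hstep hv2 hv0 h02.symm hbt htv
    rcases hb m hbm with rfl | rfl | rfl
    · exact absurd rfl hmv
    · exact absurd htm.symm (htri hxz.symm hzt)
    · exact htm
  have hx2y : G.Adj x₂ y₀ := hclose hxx1 hxx2 hx2 hx2v hb0
  have hy2x : G.Adj y₂ x₀ := hclose hyy1 hyy2 hy2 hy2v fun w hw => by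
    have := hb0 w hw
    tauto
  let e : Fin 10 → V := ![v, b₀, b₁, b₂, x₀, y₀, x₁, y₁, x₂, y₂]
  have hbx {b b' x : V} (hb : G.Adj v b) (hb' : G.Adj v b') (hx : G.Adj b' x) : b ≠ x := by
    rintro rfl
    exact htri hb' hb hx
  have hxx {b b' x x' : V} (hb : G.Adj v b) (hb' : G.Adj v b') (hbb' : b ≠ b') (hx : G.Adj b x)
      (hx' : G.Adj b' x') (hxv : x ≠ v) : x ≠ x' := by
    rintro rfl
    exact hxv (hquad hbb' hx.symm hx'.symm hb hb')
  have hxy {b b' x y x' y' : V} (hb : G.Adj v b) (hb' : G.Adj v b') (hne : x ≠ y)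
      (hx : G.Adj b x) (hy : G.Adj b y) (hxx' : G.Adj x x') (hyy' : G.Adj y y')
      (hx' : G.Adj b' x') : x' ≠ y' := by
    rintro rfl
    exact hbx hb hb' hx' (hquad hne hx hy hxx'.symm hyy'.symm)
  have hne1 := hxy hv0 hv1 hne hx0 hy0 hxx1 hyy1 hx1
  have hne2 := hxy hv1 hv2 hne1 hx1 hy1 hxx2 hyy2 hx2
  let e : Fin 10 → V := ![v, b₀, b₁, b₂, x₀, y₀, x₁, y₁, x₂, y₂]
  have hinj : Function.Injective e := by
    rw [← List.nodup_ofFn]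
    simp only [e, List.ofFn_succ, List.ofFn_zero, Matrix.cons_val_zero, Matrix.cons_val_succ,
      List.nodup_cons, List.mem_cons, List.not_mem_nil, or_false, not_or, not_false_eq_true,
      List.nodup_nil, and_true]
    exact ⟨⟨hv0.ne, hv1.ne, hv2.ne, hxv.symm, hyv.symm, hx1v.symm, hy1v.symm, hx2v.symm, hy2v.symm⟩,
      ⟨h01, h02, hbx hv0 hv0 hx0, hbx hv0 hv0 hy0, hbx hv0 hv1 hx1, hbx hv0 hv1 hy1,
        hbx hv0 hv2 hx2, hbx hv0 hv2 hy2⟩,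
      ⟨h12, hbx hv1 hv0 hx0, hbx hv1 hv0 hy0, hbx hv1 hv1 hx1, hbx hv1 hv1 hy1,
        hbx hv1 hv2 hx2, hbx hv1 hv2 hy2⟩,
      ⟨hbx hv2 hv0 hx0, hbx hv2 hv0 hy0, hbx hv2 hv1 hx1, hbx hv2 hv1 hy1,
        hbx hv2 hv2 hx2, hbx hv2 hv2 hy2⟩,
      ⟨hne, hxx hv0 hv1 h01 hx0 hx1 hxv, hxx hv0 hv1 h01 hx0 hy1 hxv,
        hxx hv0 hv2 h02 hx0 hx2 hxv, hxx hv0 hv2 h02 hx0 hy2 hxv⟩,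
      ⟨hxx hv0 hv1 h01 hy0 hx1 hyv, hxx hv0 hv1 h01 hy0 hy1 hyv,
        hxx hv0 hv2 h02 hy0 hx2 hyv, hxx hv0 hv2 h02 hy0 hy2 hyv⟩,
      ⟨hne1, hxx hv1 hv2 h12 hx1 hx2 hx1v, hxx hv1 hv2 h12 hx1 hy2 hx1v⟩,
      ⟨hxx hv1 hv2 h12 hy1 hx2 hy1v, hxx hv1 hv2 h12 hy1 hy2 hy1v⟩, hne2⟩
  have hedge : ∀ q ∈ petersenEdges, G.Adj (e q.1) (e q.2) := by
    simp only [petersenEdges, List.forall_mem_cons]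
    exact ⟨hv0, hv1, hv2, hx0, hy0, hx1, hy1, hx2, hy2, hxx1, hyy1, hxx2, hyy2, hx2y, hy2x,
      by simp⟩
  have hhom (i j : Fin 10) (hij : PetersenAdj i j) : G.Adj (e i) (e j) :=
    (petersenAdj_edges i j hij).elim (hedge (i, j)) fun hji => (hedge (j, i) hji).symm
  refine ⟨e, hinj, fun i j => ⟨fun hadj => ?_, hhom i j⟩⟩
  by_contra hnot
  obtain ⟨m, hi, hj⟩ := petersenAdj_common i j (fun hij => hadj.ne (congrArg e hij)) hnot
  exact htri (hhom m i hi) (hhom m j hj) hadj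

/-- Eleven vectors of `ℝ^10` forming a regular simplex inscribed in the unit sphere. -/
def IsRegularSimplex (c : Fin 11 → EuclideanSpace ℝ (Fin 10)) : Prop :=
  ∀ i j, ⟪c i, c j⟫ = if i = j then 1 else -1 / 10

namespace IsRegularSimplex

variable {c : Fin 11 → EuclideanSpace ℝ (Fin 10)}

theorem inner_eq (hc : IsRegularSimplex c) (i j : Fin 11) :
    ⟪c i, c j⟫ = -1 / 10 + if i = j then 11 / 10 else 0 := by
  rw [hc i j]
  split_ifs <;> norm_num

theorem sum_eq_zero (hc : IsRegularSimplex c) : ∑ m, c m = 0 := by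
  rw [← inner_self_eq_zero (𝕜 := ℝ)]
  simp only [sum_inner, inner_sum, hc.inner_eq, Finset.sum_add_distrib, Finset.sum_const,
    Finset.card_univ, Fintype.card_fin]
  norm_num

theorem sum_inner_eq_zero (hc : IsRegularSimplex c) (x : EuclideanSpace ℝ (Fin 10)) :
    ∑ m, ⟪x, c m⟫ = 0 := by
  rw [← inner_sum, hc.sum_eq_zero, inner_zero_right]

theorem span_eq_top (hc : IsRegularSimplex c) : Submodule.span ℝ (Set.range c) = ⊤ := by
  have hli : LinearIndependent ℝ fun i : Fin 10 => c i.succ := by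
    rw [Fintype.linearIndependent_iff]
    intro g hg j
    have hinner (n : Fin 11) : ∑ i, g i * ⟪c i.succ, c n⟫ = 0 := by
      simpa [sum_inner, real_inner_smul_left] using congrArg (fun z => ⟪z, c n⟫) hg
    have h0 := hinner 0
    have hj := hinner j.succ
    simp only [hc.inner_eq, mul_add, Finset.sum_add_distrib, mul_ite, mul_zero,
      Fin.succ_inj, Fin.succ_ne_zero, if_false, Finset.sum_ite_eq', Finset.mem_univ, if_true,
      Finset.sum_const_zero] at h0 hj
    linarith
  have htop := hli.span_eq_top_of_card_eq_finrank' (by simp)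
  rw [eq_top_iff, ← htop]
  exact Submodule.span_mono (by rintro _ ⟨i, rfl⟩; exact ⟨i.succ, rfl⟩)

theorem sum_inner_smul (hc : IsRegularSimplex c) (x : EuclideanSpace ℝ (Fin 10)) :
    (10 / 11 : ℝ) • ∑ m, ⟪x, c m⟫ • c m = x := by
  rw [← sub_eq_zero, ← Submodule.mem_bot (R := ℝ), ← Submodule.top_orthogonal_eq_bot,
    ← hc.span_eq_top, Submodule.mem_orthogonal']
  intro z hz
  induction hz using Submodule.span_induction with
  | zero => simp
  | add a b _ _ ha hb => rw [inner_add_right, ha, hb, add_zero]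
  | smul r a _ ha => rw [inner_smul_right, ha, mul_zero]
  | mem z hz =>
    obtain ⟨j, rfl⟩ := hz
    have h0 := hc.sum_inner_eq_zero x
    simp only [inner_sub_left, real_inner_smul_left, sum_inner, hc.inner_eq, mul_add,
      Finset.sum_add_distrib, mul_ite, mul_zero, Finset.sum_ite_eq', Finset.mem_univ, if_true,
      ← Finset.sum_mul, h0]
    ring

theorem sum_inner_mul_inner (hc : IsRegularSimplex c) (x y : EuclideanSpace ℝ (Fin 10)) :
    ∑ m, ⟪x, c m⟫ * ⟪y, c m⟫ = 11 / 10 * ⟪x, y⟫ := by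
  conv_rhs => rw [← hc.sum_inner_smul y]
  rw [real_inner_smul_right, inner_sum, ← mul_assoc]
  norm_num
  exact Finset.sum_congr rfl fun m _ => by rw [real_inner_smul_right, mul_comm]

/-- Any two regular simplices are related by a linear isometry, which maps a vector to the vector
with the same inner products. -/
theorem exists_linearIsometryEquiv (hc : IsRegularSimplex c)
    {c' : Fin 11 → EuclideanSpace ℝ (Fin 10)} (hc' : IsRegularSimplex c') :
    ∃ f : EuclideanSpace ℝ (Fin 10) ≃ₗᵢ[ℝ] EuclideanSpace ℝ (Fin 10),
      ∀ x y, (∀ m, ⟪x, c m⟫ = ⟪y, c' m⟫) → f x = y := by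
  let g : EuclideanSpace ℝ (Fin 10) →ₗ[ℝ] EuclideanSpace ℝ (Fin 10) :=
    { toFun := fun x => (10 / 11 : ℝ) • ∑ m, ⟪x, c m⟫ • c' m
      map_add' := fun x y => by
        simp only [inner_add_left, add_smul, Finset.sum_add_distrib, smul_add]
      map_smul' := fun r x => by
        simp only [real_inner_smul_left, mul_smul, ← Finset.smul_sum, RingHom.id_apply]
        rw [smul_comm] }
  have hg (x y : EuclideanSpace ℝ (Fin 10)) : ⟪g x, g y⟫ = ⟪x, y⟫ := by
    conv_rhs => rw [← hc.sum_inner_smul x, ← hc.sum_inner_smul y]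
    simp only [g, LinearMap.coe_mk, AddHom.coe_mk, real_inner_smul_left, real_inner_smul_right,
      sum_inner, inner_sum, hc.inner_eq, hc'.inner_eq]
  refine ⟨(g.isometryOfInner hg).toLinearIsometryEquiv rfl, fun x y hxy => ?_⟩
  change (10 / 11 : ℝ) • ∑ m, ⟪x, c m⟫ • c' m = y
  simp only [hxy]
  exact hc'.sum_inner_smul y

end IsRegularSimplex

/-- `x` has code `p` if its inner product with the `m`-th vertex of the simplex is `α1`, `α2` or
`α3` according to whether `p m` is `0`, `1` or `2`; `HasCode X c p` says that some `x ∈ X` has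
code `p`. -/
def HasCode (X : Set (EuclideanSpace ℝ (Fin 10))) (c : Fin 11 → EuclideanSpace ℝ (Fin 10))
    (p : Fin 11 → ℕ) : Prop :=
  ∃ x ∈ X, ∀ m, ⟪x, c m⟫ = (8 - 11 * p m) / 30

theorem HasCode.reindex {X : Set (EuclideanSpace ℝ (Fin 10))}
    {c : Fin 11 → EuclideanSpace ℝ (Fin 10)} {p : Fin 11 → ℕ} (hp : HasCode X c p)
    (σ : Fin 11 → Fin 11) : HasCode X (c ∘ σ) (p ∘ σ) :=
  hp.imp fun _ hx => ⟨hx.1, fun m => hx.2 (σ m)⟩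

/-- A regular simplex all of whose vertices are in `X`. -/
def IsSimplexIn (X : Set (EuclideanSpace ℝ (Fin 10)))
    (c : Fin 11 → EuclideanSpace ℝ (Fin 10)) : Prop :=
  IsRegularSimplex c ∧ ∀ m, c m ∈ X

theorem IsSimplexIn.reindex {X : Set (EuclideanSpace ℝ (Fin 10))}
    {c : Fin 11 → EuclideanSpace ℝ (Fin 10)} (hc : IsSimplexIn X c) {σ : Fin 11 → Fin 11}
    (hσ : Function.Injective σ) : IsSimplexIn X (c ∘ σ) :=
  ⟨fun i j => by simp [hc.1 (σ i) (σ j), hσ.eq_iff], fun m => hc.2 (σ m)⟩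

section Codes

variable {X : Set (EuclideanSpace ℝ (Fin 10))} {c : Fin 11 → EuclideanSpace ℝ (Fin 10)}
  {p q : Fin 11 → ℕ}

theorem IsWConfig.inner_cases (hX : IsWConfig X) {x y : EuclideanSpace ℝ (Fin 10)} (hx : x ∈ X)
    (hy : y ∈ X) (hxy : x ≠ y) : ⟪x, y⟫ = 4 / 15 ∨ ⟪x, y⟫ = -1 / 10 ∨ ⟪x, y⟫ = -7 / 15 := by
  simpa [α1, α2, α3] using hX.2.2.1 x hx y hy hxy

theorem IsWConfig.inner_self (hX : IsWConfig X) {x : EuclideanSpace ℝ (Fin 10)} (hx : x ∈ X) :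
    ⟪x, x⟫ = 1 := by
  rw [real_inner_self_eq_norm_sq, hX.2.1 x hx, one_pow]

theorem IsWConfig.exists_code (hX : IsWConfig X) (hc : IsSimplexIn X c)
    {x : EuclideanSpace ℝ (Fin 10)} (hx : x ∈ X) (hxc : ∀ m, x ≠ c m) :
    ∃ p : Fin 11 → ℕ, ∀ m, ⟪x, c m⟫ = (8 - 11 * p m) / 30 := by
  have (m : Fin 11) : ∃ k : ℕ, ⟪x, c m⟫ = (8 - 11 * k) / 30 := by
    rcases hX.inner_cases hx (hc.2 m) (hxc m) with h | h | h
    · exact ⟨0, by rw [h]; norm_num⟩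
    · exact ⟨1, by rw [h]; norm_num⟩
    · exact ⟨2, by rw [h]; norm_num⟩
  exact Classical.skolem.mp this

theorem HasCode.le_two (hX : IsWConfig X) (hc : IsSimplexIn X c) (hp : HasCode X c p)
    (m : Fin 11) : p m ≤ 2 := by
  obtain ⟨x, hx, hxp⟩ := hp
  have hm := hxp m
  by_cases hxc : x = c m
  · rw [hxc, hX.inner_self (hc.2 m)] at hm
    have : (0 : ℝ) ≤ p m := Nat.cast_nonneg _
    linarith
  · have : (p m : ℝ) ≤ 2 := by
      rcases hX.inner_cases hx (hc.2 m) hxc with h | h | h <;> rw [h] at hm <;> linarith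
    exact_mod_cast this

theorem HasCode.sum_eq (hc : IsSimplexIn X c) (hp : HasCode X c p) : ∑ m, p m = 8 := by
  obtain ⟨x, -, hxp⟩ := hp
  have h0 := hc.1.sum_inner_eq_zero x
  simp only [hxp, ← Finset.sum_div, Finset.sum_sub_distrib, ← Finset.mul_sum, Finset.sum_const,
    Finset.card_univ, Fintype.card_fin] at h0
  have : ((∑ m, p m : ℕ) : ℝ) = 8 := by
    push_cast
    norm_num at h0
    linarith
  exact_mod_cast this

theorem sum_code_mul_code (hc : IsSimplexIn X c) {x y : EuclideanSpace ℝ (Fin 10)} (hx : x ∈ X)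
    (hy : y ∈ X) (hxp : ∀ m, ⟪x, c m⟫ = (8 - 11 * p m) / 30)
    (hyq : ∀ m, ⟪y, c m⟫ = (8 - 11 * q m) / 30) :
    ((∑ m, p m * q m : ℕ) : ℝ) = 64 / 11 + 90 / 11 * ⟪x, y⟫ := by
  have hp : ((∑ m, p m : ℕ) : ℝ) = 8 := by exact_mod_cast HasCode.sum_eq hc ⟨x, hx, hxp⟩
  have hq : ((∑ m, q m : ℕ) : ℝ) = 8 := by exact_mod_cast HasCode.sum_eq hc ⟨y, hy, hyq⟩
  have h := hc.1.sum_inner_mul_inner x y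
  have hexp (m : Fin 11) : ⟪x, c m⟫ * ⟪y, c m⟫ =
      64 / 900 - 88 / 900 * p m - 88 / 900 * q m + 121 / 900 * (p m * q m) := by
    rw [hxp, hyq]
    ring
  simp only [hexp, Finset.sum_sub_distrib, Finset.sum_add_distrib, ← Finset.mul_sum,
    Finset.sum_const, Finset.card_univ, Fintype.card_fin] at h
  push_cast at hp hq ⊢
  rw [hp, hq] at h
  norm_num at h
  linarith

theorem HasCode.sum_sq (hX : IsWConfig X) (hc : IsSimplexIn X c) (hp : HasCode X c p) :
    ∑ m, p m * p m = 14 := by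
  obtain ⟨x, hx, hxp⟩ := hp
  have h := sum_code_mul_code hc hx hx hxp hxp
  rw [hX.inner_self hx] at h
  norm_num at h
  exact_mod_cast h

theorem HasCode.sum_mul (hX : IsWConfig X) (hc : IsSimplexIn X c) (hp : HasCode X c p)
    (hq : HasCode X c q) : ∑ m, p m * q m = 2 ∨ ∑ m, p m * q m = 5 ∨ ∑ m, p m * q m = 8 ∨
      ∑ m, p m * q m = 14 := by
  obtain ⟨x, hx, hxp⟩ := hp
  obtain ⟨y, hy, hyq⟩ := hq
  have h := sum_code_mul_code hc hx hy hxp hyq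
  by_cases hxy : x = y
  · subst hxy
    rw [hX.inner_self hx] at h
    norm_num at h
    exact .inr (.inr (.inr (by exact_mod_cast h)))
  · rcases hX.inner_cases hx hy hxy with h' | h' | h' <;> rw [h'] at h <;> norm_num at h
    · exact .inr (.inr (.inl (by exact_mod_cast h)))
    · exact .inr (.inl (by exact_mod_cast h))
    · exact .inl (by exact_mod_cast h)

/-- Every pair of vertices of the simplex is the set of positions of the digit `1` in some code. -/
theorem IsWConfig.exists_hasCode (hX : IsWConfig X) (hc : IsSimplexIn X c) {i j : Fin 11}
    (hij : i ≠ j) : ∃ p, HasCode X c p ∧ p i = 1 ∧ p j = 1 := by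
  have hne {i j : Fin 11} (hij : i ≠ j) : c i ≠ c j := by
    intro h
    have h1 := hc.1 i j
    rw [h, hX.inner_self (hc.2 j), if_neg hij] at h1
    norm_num at h1
  have hcard := hX.2.2.2.2 (c i) (hc.2 i) (c j) (hc.2 j) (hne hij) 1 1 1
    (by simp [hc.1 i j, hij, wAngle, α2])
  set Y := {w | w ∈ X ∧ ⟪c i, w⟫ = wAngle 1 ∧ ⟪w, c j⟫ = wAngle 1}
  have hY : Y.ncard = 10 := hcard
  have hα : wAngle 1 = -1 / 10 := rfl
  obtain ⟨x, ⟨hx, hxi, hxj⟩, hxc⟩ : ∃ x ∈ Y, x ∉ Set.range c := by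
    by_contra! hall
    have hsub : Y ⊆ c '' ((Finset.univ.erase i).erase j : Finset (Fin 11)) := by
      rintro x hx
      obtain ⟨m, rfl⟩ := hall x hx
      obtain ⟨hm, hmi, hmj⟩ := hx
      refine ⟨m, ?_, rfl⟩
      simp only [Finset.coe_erase, Finset.coe_univ, Set.mem_sdiff, Set.mem_univ, true_and,
        Set.mem_singleton_iff]
      constructor <;> rintro rfl
      · rw [hX.inner_self hm, hα] at hmi
        norm_num at hmi
      · rw [hX.inner_self hm, hα] at hmj
        norm_num at hmj
    have h1 := Set.ncard_le_ncard hsub (Set.toFinite _)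
    have h2 := Set.ncard_image_le (f := c)
      (s := ((Finset.univ.erase i).erase j : Finset (Fin 11))) (Set.toFinite _)
    rw [Set.ncard_coe_finset, Finset.card_erase_of_mem (by simp [hij.symm]),
      Finset.card_erase_of_mem (Finset.mem_univ i), Finset.card_univ, Fintype.card_fin] at h2
    omega
  obtain ⟨p, hp⟩ := hX.exists_code hc hx fun m hm => hxc ⟨m, hm.symm⟩
  have hdig (m : Fin 11) (hm : ⟪x, c m⟫ = -1 / 10) : p m = 1 := by
    have : (p m : ℝ) = 1 := by linarith [hp m]
    exact_mod_cast this
  exact ⟨p, ⟨x, hx, hp⟩, hdig i (by rw [real_inner_comm, hxi, hα]), hdig j (by rw [hxj, hα])⟩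

end Codes

theorem IsWConfig.exists_isSimplexIn {X : Set (EuclideanSpace ℝ (Fin 10))} (hX : IsWConfig X) :
    ∃ c, IsSimplexIn X c := by
  classical
  have hfin : X.Finite := Set.finite_of_ncard_ne_zero (by rw [hX.1]; norm_num)
  have := hfin.fintype
  have hcard (Q : EuclideanSpace ℝ (Fin 10) → Prop) :
      Nat.card {x : X // Q x} = {v | v ∈ X ∧ Q v}.ncard := by
    rw [← Nat.card_coe_set_eq]
    exact Nat.card_congr (Equiv.subtypeSubtypeEquivSubtypeInter _ _)
  let G : SimpleGraph X :=
    { Adj := fun x y => ⟪x.1, y.1⟫ = α2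
      symm := ⟨fun x y h => by rwa [real_inner_comm]⟩
      loopless := ⟨fun x h => by
        rw [hX.inner_self x.2] at h
        norm_num [α2] at h⟩ }
  have hcommon (x y : X) : Fintype.card (G.commonNeighbors x y) =
      {w | w ∈ X ∧ ⟪x.1, w⟫ = wAngle 1 ∧ ⟪w, y.1⟫ = wAngle 1}.ncard := by
    rw [← hcard, ← Nat.card_eq_fintype_card]
    refine Nat.card_congr (Equiv.subtypeEquivRight fun w => ?_)
    rw [SimpleGraph.mem_commonNeighbors, G.adj_comm y w]
    rfl
  have hG : G.IsSRGWith 66 20 10 4 :=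
    { card := by rw [← Nat.card_eq_fintype_card, Nat.card_coe_set_eq, hX.1]
      regular := fun x => by
        rw [← SimpleGraph.card_neighborSet_eq_degree, ← Nat.card_eq_fintype_card]
        exact (hcard _).trans (hX.2.2.2.1 x x.2).2.1
      of_adj := fun x y h => by
        rw [hcommon]
        exact hX.2.2.2.2 x x.2 y y.2 (fun hxy => h.ne (Subtype.ext hxy)) 1 1 1 h
      of_not_adj := fun x y hne h => by
        have hne' : x.1 ≠ y.1 := fun hxy => hne (Subtype.ext hxy)
        change Fintype.card (G.commonNeighbors x y) = 4
        rw [hcommon]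
        rcases hX.2.2.1 x x.2 y y.2 hne' with h' | h' | h'
        · exact hX.2.2.2.2 x x.2 y y.2 hne' 0 1 1 h'
        · exact absurd h' h
        · exact hX.2.2.2.2 x x.2 y y.2 hne' 2 1 1 h' }
  obtain ⟨s, hs, hs11⟩ := exists_isClique_card_eleven G hG
  let e := s.equivFinOfCardEq hs11
  refine ⟨fun m => (e.symm m).1.1, fun i j => ?_, fun m => (e.symm m).1.2⟩
  split_ifs with hij
  · subst hij
    exact hX.inner_self (e.symm i).1.2
  · exact hs (e.symm i).2 (e.symm j).2 fun h => hij (e.symm.injective (Subtype.ext h))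

section Codes

variable {X : Set (EuclideanSpace ℝ (Fin 10))} {c : Fin 11 → EuclideanSpace ℝ (Fin 10)}
  {p : Fin 11 → ℕ}

/-- A code has the digit `1` twice and the digit `2` three times. -/
theorem HasCode.card_digits (hX : IsWConfig X) (hc : IsSimplexIn X c) (hp : HasCode X c p) :
    (Finset.univ.filter fun m => p m = 1).card = 2 ∧
      (Finset.univ.filter fun m => p m = 2).card = 3 := by
  have h1 := hp.sum_eq hc
  have h2 := hp.sum_sq hX hc
  have e1 (m : Fin 11) : p m = (if p m = 1 then 1 else 0) + 2 * (if p m = 2 then 1 else 0) := by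
    have := hp.le_two hX hc m
    interval_cases p m <;> rfl
  have e2 (m : Fin 11) :
      p m * p m = (if p m = 1 then 1 else 0) + 4 * (if p m = 2 then 1 else 0) := by
    have := hp.le_two hX hc m
    interval_cases p m <;> rfl
  rw [Finset.sum_congr rfl fun m _ => e1 m] at h1
  rw [Finset.sum_congr rfl fun m _ => e2 m] at h2
  simp only [Finset.sum_add_distrib, ← Finset.mul_sum, Finset.sum_boole, Nat.cast_id] at h1 h2
  omega

/-- A code is determined by the two positions of the digit `1` and the three positions of the
digit `2`. -/
theorem HasCode.exists_triple (hX : IsWConfig X) (hc : IsSimplexIn X c) (hp : HasCode X c p)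
    {i j : Fin 11} (hij : i ≠ j) (hi : p i = 1) (hj : p j = 1) :
    ∃ s ∈ Finset.univ.powersetCard 3, i ∉ s ∧ j ∉ s ∧ ∀ m, p m =
      (if m = i then 1 else 0) + (if m = j then 1 else 0) + 2 * (if m ∈ s then 1 else 0) := by
  obtain ⟨h1, h2⟩ := hp.card_digits hX hc
  have hones : {i, j} = Finset.univ.filter fun m => p m = 1 :=
    Finset.eq_of_subset_of_card_le
      (by simp [Finset.insert_subset_iff, hi, hj]) (by rw [h1, Finset.card_pair hij])
  refine ⟨Finset.univ.filter fun m => p m = 2, by simp [Finset.mem_powersetCard, h2],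
    by simp [hi], by simp [hj], fun m => ?_⟩
  have hm : (m = i ∨ m = j) ↔ p m = 1 := by simpa using congrArg (m ∈ ·) hones
  have := hp.le_two hX hc m
  by_cases hmi : m = i
  · subst hmi
    simp [hi, hij]
  by_cases hmj : m = j
  · subst hmj
    simp [hj, hij.symm]
  have : p m ≠ 1 := fun h => (hm.mpr h).elim hmi hmj
  simp only [hmi, hmj, if_false, Finset.mem_filter, Finset.mem_univ, true_and]
  split_ifs <;> omega

end Codes

theorem sum_triple_mul {p q : Fin 11 → ℕ} {i j : Fin 11} {s : Finset (Fin 11)}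
    (hp : ∀ m, p m =
      (if m = i then 1 else 0) + (if m = j then 1 else 0) + 2 * (if m ∈ s then 1 else 0)) :
    ∑ m, p m * q m = q i + q j + 2 * ∑ m ∈ s, q m := by
  simp [hp, add_mul, Finset.sum_add_distrib, ← Finset.mul_sum]

theorem card_filter_succ_mem {n : ℕ} {s : Finset (Fin (n + 1))} (hs : 0 ∉ s) :
    (Finset.univ.filter fun j : Fin n => j.succ ∈ s).card = s.card := by
  rw [← Finset.card_map (Fin.succEmb n)]
  congr 1
  ext m
  cases m using Fin.cases <;> simp [hs]

/-- A simplex whose vertices are labelled so that the codes with digit `1` at position `0`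
describe the standard labelling of the Petersen graph. -/
def IsPetersenLabelled (X : Set (EuclideanSpace ℝ (Fin 10)))
    (c : Fin 11 → EuclideanSpace ℝ (Fin 10)) : Prop :=
  IsSimplexIn X c ∧ ∀ i, HasCode X c (digit (petersenCode i))

theorem digit_petersenCode : ∀ i j : Fin 10, digit (petersenCode i) j.succ =
    (if j = i then 1 else 0) + 2 * (if PetersenAdj i j then 1 else 0) := by
  decide +kernel

theorem digit_petersenCode_zero : ∀ i : Fin 10, digit (petersenCode i) 0 = 1 := by
  decide +kernel

theorem IsWConfig.exists_isPetersenLabelled {X : Set (EuclideanSpace ℝ (Fin 10))}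
    (hX : IsWConfig X) : ∃ c, IsPetersenLabelled X c := by
  obtain ⟨c, hc⟩ := hX.exists_isSimplexIn
  choose P hP hP0 hPi using fun i : Fin 10 => hX.exists_hasCode hc (Fin.succ_ne_zero i).symm
  choose s hs3 hs0 hsi hs using fun i : Fin 10 =>
    (hP i).exists_triple hX hc (Fin.succ_ne_zero i).symm (hP0 i) (hPi i)
  have hpair (i k : Fin 10) (hik : i ≠ k) : (if i.succ ∈ s k then 1 else 0) +
      (if k.succ ∈ s i then 1 else 0) + 2 * (s i ∩ s k).card = 2 := by
    have h := (hP i).sum_mul hX hc (hP k)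
    have hsum : ∑ m ∈ s i, P k m = (if k.succ ∈ s i then 1 else 0) + 2 * (s i ∩ s k).card := by
      simp [hs k, Finset.sum_add_distrib, hs0 i, mul_comm]
    rw [sum_triple_mul (hs i), hP0, hsum, hs k i.succ] at h
    simp only [Fin.succ_ne_zero, if_false, Fin.succ_inj, hik] at h
    omega
  have hsymm (i k : Fin 10) (h : k.succ ∈ s i) : i.succ ∈ s k := by
    by_contra hnot
    have := hpair i k (by rintro rfl; exact hsi i h)
    simp only [h, hnot, if_true, if_false] at this
    omega
  let G : SimpleGraph (Fin 10) :=
    { Adj := fun i j => j.succ ∈ s i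
      symm := ⟨hsymm⟩
      loopless := ⟨hsi⟩ }
  have hadj (i j : Fin 10) : G.Adj i j ↔ j.succ ∈ s i := Iff.rfl
  have : DecidableRel G.Adj := fun i j => inferInstanceAs (Decidable (j.succ ∈ s i))
  have hcommon (i k : Fin 10) : Fintype.card (G.commonNeighbors i k) = (s i ∩ s k).card := by
    rw [← card_filter_succ_mem (s := s i ∩ s k) (by simp [hs0]), ← Set.toFinset_card]
    congr 1
    ext j
    simp [SimpleGraph.mem_commonNeighbors, hadj]
  have hG : G.IsSRGWith 10 3 0 1 :=
    { card := Fintype.card_fin 10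
      regular := fun i => by
        rw [← (Finset.mem_powersetCard.mp (hs3 i)).2, ← card_filter_succ_mem (hs0 i),
          ← SimpleGraph.card_neighborFinset_eq_degree]
        congr 1
        ext j
        simp [hadj]
      of_adj := fun i k h => by
        have := hpair i k h.ne
        rw [if_pos ((hadj i k).mp h), if_pos (hsymm i k h)] at this
        rw [hcommon]
        omega
      of_not_adj := fun i k hne h => by
        have := hpair i k hne
        rw [if_neg (fun h' => h (hsymm k i h')), if_neg h] at this
        change Fintype.card (G.commonNeighbors i k) = 1
        rw [hcommon]
        omega }
  obtain ⟨e, he, hiff⟩ := exists_petersen_labelling G hG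
  let σ : Fin 11 → Fin 11 := Fin.cons 0 fun i => (e i).succ
  have hσ : Function.Injective σ := by
    rw [Fin.cons_injective_iff]
    refine ⟨?_, (Fin.succ_injective 10).comp he⟩
    rintro ⟨i, hi⟩
    exact Fin.succ_ne_zero _ hi
  refine ⟨c ∘ σ, hc.reindex hσ, fun i => ?_⟩
  convert (hP (e i)).reindex σ using 1
  funext m
  cases m using Fin.cases with
  | zero => rw [digit_petersenCode_zero]; exact (hP0 (e i)).symm
  | succ j =>
    rw [digit_petersenCode]
    change _ = P (e i) (e j).succ
    rw [hs (e i)]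
    simp [← hiff, hadj, he.eq_iff]

/-- Whether a code with digits `1` at `i`, `j` and digits `2` on `s` has an admissible inner product
with the code encoded by `n`. -/
def fits (n : ℕ) (i j : Fin 11) (s : Finset (Fin 11)) : Bool :=
  let d := digit n i + digit n j + 2 * ∑ m ∈ s, digit n m
  Nat.beq d 2 || Nat.beq d 5 || Nat.beq d 8 || Nat.beq d 14

theorem HasCode.fits {X : Set (EuclideanSpace ℝ (Fin 10))}
    {c : Fin 11 → EuclideanSpace ℝ (Fin 10)} {p : Fin 11 → ℕ} {n : ℕ} {i j : Fin 11}
    {s : Finset (Fin 11)} (hX : IsWConfig X) (hc : IsSimplexIn X c) (hp : HasCode X c p)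
    (hn : HasCode X c (digit n)) (hps : ∀ m, p m =
      (if m = i then 1 else 0) + (if m = j then 1 else 0) + 2 * (if m ∈ s then 1 else 0)) :
    fits n i j s = true := by
  have h := hp.sum_mul hX hc hn
  rw [sum_triple_mul hps] at h
  simpa [_root_.fits, or_assoc] using h

theorem exists_petersenCode_eq : ∀ n ∈ petersenCodes, ∃ k, petersenCode k = n := by
  decide +kernel

theorem IsPetersenLabelled.all_fits {X : Set (EuclideanSpace ℝ (Fin 10))}
    {c : Fin 11 → EuclideanSpace ℝ (Fin 10)} {p : Fin 11 → ℕ} {i j : Fin 11}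
    {s : Finset (Fin 11)} (hc : IsPetersenLabelled X c) (hX : IsWConfig X) (hp : HasCode X c p)
    (hps : ∀ m, p m =
      (if m = i then 1 else 0) + (if m = j then 1 else 0) + 2 * (if m ∈ s then 1 else 0)) :
    (petersenCodes.all fun n => fits n i j s) = true := by
  rw [List.all_eq_true]
  intro n hn
  obtain ⟨k, rfl⟩ := exists_petersenCode_eq n hn
  exact hp.fits hX hc.1 (hc.2 k) hps

/-- The encoding of the code with digits `1` at `1`, `2` and digits `2` at `0`, `7`, `9`. -/
def orientationCode : ℕ := 557078

theorem filter_fits_one_two : ((Finset.univ.powersetCard 3).filter fun s =>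
    (petersenCodes.all fun n => fits n 1 2 s) = true ∧ 1 ∉ s ∧ 2 ∉ s) =
      {{0, 7, 9}, {0, 8, 10}} := by
  decide +kernel

theorem card_filter_fits_le_one : ∀ i j : Fin 11, i < j →
    ((Finset.univ.powersetCard 3).filter fun s => (petersenCodes.all fun n => fits n i j s) = true ∧
      i ∉ s ∧ j ∉ s ∧ fits orientationCode i j s = true).card ≤ 1 := by
  decide +kernel

/-- An automorphism of the Petersen graph that exchanges the two possible orientations. -/
def petersenFlip : Fin 11 → Fin 11 := ![0, 1, 2, 3, 4, 6, 5, 8, 7, 10, 9]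

theorem petersenCode_flip : ∀ i, ∃ k, ∀ m,
    digit (petersenCode k) (petersenFlip m) = digit (petersenCode i) m := by
  decide +kernel

theorem IsWConfig.exists_oriented {X : Set (EuclideanSpace ℝ (Fin 10))} (hX : IsWConfig X) :
    ∃ c, IsPetersenLabelled X c ∧ HasCode X c (digit orientationCode) := by
  obtain ⟨c, hc, hpet⟩ := hX.exists_isPetersenLabelled
  obtain ⟨p, hp, h1, h2⟩ := hX.exists_hasCode hc (i := 1) (j := 2) (by decide)
  obtain ⟨s, hs3, hs1, hs2, hs⟩ := hp.exists_triple hX hc (by decide) h1 h2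
  have hs12 := filter_fits_one_two.le (Finset.mem_filter.mpr
    ⟨hs3, IsPetersenLabelled.all_fits ⟨hc, hpet⟩ hX hp hs, hs1, hs2⟩)
  rw [Finset.mem_insert, Finset.mem_singleton] at hs12
  rcases hs12 with rfl | rfl
  · refine ⟨c, ⟨hc, hpet⟩, ?_⟩
    convert hp using 1
    funext m
    rw [hs m]
    revert m
    decide +kernel
  · refine ⟨c ∘ petersenFlip, ⟨hc.reindex (by decide +kernel), fun i => ?_⟩, ?_⟩
    · obtain ⟨k, hk⟩ := petersenCode_flip i
      convert (hpet k).reindex petersenFlip using 1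
      funext m
      exact (hk m).symm
    · convert hp.reindex petersenFlip using 1
      funext m
      rw [Function.comp_apply, hs]
      revert m
      decide +kernel

/-- Any two `W`-configurations in ℝ^10 are related by an orthogonal
transformation: there is a linear isometric equivalence of
`EuclideanSpace ℝ (Fin 10)` carrying one onto the other. -/
theorem wConfig_unique (X X' : Set (EuclideanSpace ℝ (Fin 10)))
    (hX : IsWConfig X) (hX' : IsWConfig X') :
    ∃ f : EuclideanSpace ℝ (Fin 10) ≃ₗᵢ[ℝ] EuclideanSpace ℝ (Fin 10),
      f '' X = X' := by
  obtain ⟨c, hpet, hor⟩ := hX.exists_oriented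
  have hc := hpet.1
  obtain ⟨c', hpet', hor'⟩ := hX'.exists_oriented
  have hc' := hpet'.1
  obtain ⟨f, hf⟩ := hc.1.exists_linearIsometryEquiv hc'.1
  refine ⟨f, Set.eq_of_subset_of_ncard_le ?_ ?_ ?_⟩
  · rintro _ ⟨x, hx, rfl⟩
    by_cases hxc : ∃ m, x = c m
    · obtain ⟨m, rfl⟩ := hxc
      rw [hf (c m) (c' m) fun n => by rw [hc.1, hc'.1]]
      exact hc'.2 m
    · obtain ⟨p, hxp⟩ := hX.exists_code hc hx (not_exists.mp hxc)
      have hp : HasCode X c p := ⟨x, hx, hxp⟩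
      obtain ⟨i, j, hij, hpi, hpj⟩ : ∃ i j, i < j ∧ p i = 1 ∧ p j = 1 := by
        obtain ⟨i, j, hij, hones⟩ := Finset.card_eq_two.mp (hp.card_digits hX hc).1
        have hi : p i = 1 := by simpa using hones.ge (Finset.mem_insert_self i {j})
        have hj : p j = 1 := by simpa using hones.ge (show j ∈ {i, j} by simp)
        rcases hij.lt_or_gt with h | h
        · exact ⟨i, j, h, hi, hj⟩
        · exact ⟨j, i, h, hj, hi⟩
      obtain ⟨q, hq, hqi, hqj⟩ := hX'.exists_hasCode hc' hij.ne
      obtain ⟨s, hs3, hsi, hsj, hs⟩ := hp.exists_triple hX hc hij.ne hpi hpj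
      obtain ⟨t, ht3, hti, htj, ht⟩ := hq.exists_triple hX' hc' hij.ne hqi hqj
      have hst : s = t := Finset.card_le_one.mp (card_filter_fits_le_one i j hij) s
        (Finset.mem_filter.mpr ⟨hs3, hpet.all_fits hX hp hs, hsi, hsj,
          hp.fits hX hc hor hs⟩) t
        (Finset.mem_filter.mpr ⟨ht3, hpet'.all_fits hX' hq ht, hti, htj,
          hq.fits hX' hc' hor' ht⟩)
      obtain ⟨y, hy, hyq⟩ := hq
      rw [hf x y fun m => by rw [hxp, hyq, hs, ht, hst]]
      exact hy
  · rw [Set.ncard_image_of_injective _ f.injective, hX.1, hX'.1]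
  · exact Set.finite_of_ncard_ne_zero (by rw [hX'.1]; norm_num)
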